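/- In the max-variant, for every k ≥ 2 facilities, every two-phase mechanism (not necessarily strategyproof) has approximation ratio at least 2k: there exists an instance (with m = k groups of two agents each) on which the social cost of the mechanism's output is at least 2k times the minimum social cost over all feasible solutions. -/

import Mathlib

open Finset

noncomputable section

/-- A distributed facility location setting for `k` facilities and `m` groups:
`n ≥ 2` agents on the real line, partitioned into `m ≥ k` disjoint nonempty groups. -/
structure FLSetting (k m : ℕ) where
  n : ℕ
  hn : 2 ≤ n
  hmk : k ≤ m
  grp : Fin n → Fin m
  surj : Function.Surjective grp

/-- A two-phase mechanism for `k` facilities: for each number `m` of groups, a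
representative function on finite multisets of reals, and a selection function
producing the `k` facility locations from the multiset of representatives. -/
structure TwoPhase (k : ℕ) where
  rep : ℕ → Multiset ℝ → ℝ
  sel : ℕ → Multiset ℝ → Fin k → ℝ

/-- Validity of a two-phase mechanism: the representative of a nonempty multiset
is one of its elements, and the selected facility locations form a sub-multiset
of the representatives. -/
def TwoPhase.Valid {k : ℕ} (M : TwoPhase k) : Prop :=
  (∀ (m : ℕ) (S : Multiset ℝ), S ≠ 0 → M.rep m S ∈ S) ∧
  (∀ (m : ℕ) (R : Multiset ℝ), Multiset.card R = m → k ≤ m →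
    (↑(List.ofFn (M.sel m R)) : Multiset ℝ) ≤ R)

/-- The multiset of (reported) positions of the agents in group `j`. -/
def groupMS {k m : ℕ} (S : FLSetting k m) (x : Fin S.n → ℝ) (j : Fin m) : Multiset ℝ :=
  (Finset.univ.filter (fun i => S.grp i = j)).val.map x

/-- The number of agents in group `j`. -/
def groupSize {k m : ℕ} (S : FLSetting k m) (j : Fin m) : ℕ :=
  (Finset.univ.filter (fun i => S.grp i = j)).card

/-- The multiset of the `m` group representatives. -/
def repsMS {k m : ℕ} (M : TwoPhase k) (S : FLSetting k m) (x : Fin S.n → ℝ) : Multiset ℝ :=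
  (Finset.univ.val.map fun j : Fin m => M.rep m (groupMS S x j))

/-- The facility locations output by mechanism `M` on reported positions `x`. -/
def outcome {k m : ℕ} (M : TwoPhase k) (S : FLSetting k m) (x : Fin S.n → ℝ) : Fin k → ℝ :=
  M.sel m (repsMS M S x)

/-- Sum-variant individual cost: total distance to all facilities. -/
def sumCost (k : ℕ) (xi : ℝ) (y : Fin k → ℝ) : ℝ := ∑ ℓ, |xi - y ℓ|

/-- Max-variant individual cost: distance to the farthest facility. -/
def maxCost (k : ℕ) (xi : ℝ) (y : Fin k → ℝ) : ℝ := ⨆ ℓ, |xi - y ℓ|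

/-- Social cost: average over groups of the average individual cost within the group. -/
def SC {k m : ℕ} (cost : ℝ → (Fin k → ℝ) → ℝ) (S : FLSetting k m) (x : Fin S.n → ℝ)
    (y : Fin k → ℝ) : ℝ :=
  (1 / (m : ℝ)) * ∑ j : Fin m,
    (1 / (groupSize S j : ℝ)) *
      ∑ i ∈ Finset.univ.filter (fun i => S.grp i = j), cost (x i) y

/-- A feasible solution opens the `k` facilities at the positions of `k` distinct agents. -/
def Feasible {k m : ℕ} (S : FLSetting k m) (x : Fin S.n → ℝ) (y : Fin k → ℝ) : Prop :=
  ∃ f : Fin k → Fin S.n, Function.Injective f ∧ ∀ ℓ, y ℓ = x (f ℓ)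

/-- Strategyproofness with respect to an individual cost function. -/
def Strategyproof {k : ℕ} (cost : ℝ → (Fin k → ℝ) → ℝ) (M : TwoPhase k) : Prop :=
  ∀ (m : ℕ) (S : FLSetting k m) (x : Fin S.n → ℝ) (i : Fin S.n) (x' : ℝ),
    cost (x i) (outcome M S x) ≤ cost (x i) (outcome M S (Function.update x i x'))

/-- Strategyproofness restricted to instances with exactly `m` groups. -/
def StrategyproofOn {k : ℕ} (cost : ℝ → (Fin k → ℝ) → ℝ) (M : TwoPhase k) (m : ℕ) : Prop :=
  ∀ (S : FLSetting k m) (x : Fin S.n → ℝ) (i : Fin S.n) (x' : ℝ),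
    cost (x i) (outcome M S x) ≤ cost (x i) (outcome M S (Function.update x i x'))

/-- The `t`-th leftmost element of a multiset of reals (1-indexed). -/
def kthLeftmost (S : Multiset ℝ) (t : ℕ) : ℝ := (S.sort (· ≤ ·)).getD (t - 1) 0

/-- The mechanism `M_m(θ, ℓ, r)` for two facilities: each group's representative is the
position of its `⌈θ·n_g⌉`-th leftmost agent, and the facilities are opened at the
`⌈ℓm⌉`-th and `⌈rm⌉`-th leftmost representative locations. -/
def Mmech (θ l r : ℝ) : TwoPhase 2 where
  rep := fun _ S => kthLeftmost S ⌈θ * (Multiset.card S : ℝ)⌉₊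
  sel := fun m R => ![kthLeftmost R ⌈l * (m : ℝ)⌉₊, kthLeftmost R ⌈r * (m : ℝ)⌉₊]

/-!
Put all agents at one point `a` except for a single agent at another point `b`, chosen so that `b`
is the representative of the pair `{a, b}`. Opening every facility at `a` costs only the outlier,
and `k ≥ 2` facilities cannot all be opened at the outlier, so this is optimal. With as many groups
as facilities the mechanism opens a facility at every representative, hence at both `a` and `b`, and
then each of the `2 * k` agents is as badly off as the outlier is in the optimum.
-/

section EqualGroups

variable {k m : ℕ}

theorem FLSetting.exists_forall_groupSize_eq {s : ℕ} (hkm : k ≤ m) (hms : 2 ≤ m * s) :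
    ∃ S : FLSetting k m, ∀ j, groupSize S j = s := by
  have hs : 0 < s := Nat.pos_of_ne_zero (by rintro rfl; simp at hms)
  let S : FLSetting k m :=
    { n := m * s
      hn := hms
      hmk := hkm
      grp := fun i => (finProdFinEquiv.symm i).1
      surj := fun j => ⟨finProdFinEquiv (j, ⟨0, hs⟩), by simp⟩ }
  refine ⟨S, fun j => ?_⟩
  have hgrp : ∀ p, S.grp (finProdFinEquiv p) = p.1 :=
    fun p => congrArg Prod.fst (finProdFinEquiv.symm_apply_apply p)
  have hfib : univ.filter (fun i => S.grp i = j) =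
      (univ : Finset (Fin s)).image fun e => finProdFinEquiv (j, e) := by
    ext i
    obtain ⟨⟨j', e⟩, rfl⟩ := finProdFinEquiv.surjective i
    simp [hgrp, eq_comm]
  have hinj : Function.Injective fun e : Fin s => finProdFinEquiv (j, e) :=
    finProdFinEquiv.injective.comp (Prod.mk_right_injective j)
  rw [groupSize, hfib, card_image_of_injective _ hinj, card_fin]

theorem groupSize_pos (S : FLSetting k m) (j : Fin m) : 0 < groupSize S j := by
  obtain ⟨i, hi⟩ := S.surj j
  exact card_pos.2 ⟨i, by simpa using hi⟩

theorem FLSetting.n_eq_mul {S : FLSetting k m} {s : ℕ} (hS : ∀ j, groupSize S j = s) :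
    S.n = m * s :=
  calc S.n = #(univ : Finset (Fin S.n)) := (card_fin S.n).symm
    _ = ∑ j, groupSize S j := card_eq_sum_card_fiberwise (f := S.grp) fun _ _ => by simp
    _ = m * s := by simp [hS]

theorem SC_eq_sum_div {S : FLSetting k m} {s : ℕ} (hS : ∀ j, groupSize S j = s)
    (cost : ℝ → (Fin k → ℝ) → ℝ) (x : Fin S.n → ℝ) (y : Fin k → ℝ) :
    SC cost S x y = (∑ i, cost (x i) y) / S.n := by
  simp only [SC, hS]
  have hn : (S.n : ℝ) = m * s := by exact_mod_cast FLSetting.n_eq_mul hS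
  rw [← mul_sum, sum_fiberwise, hn]
  ring

end EqualGroups

section MaxCost

variable {k : ℕ}

theorem maxCost_nonneg (p : ℝ) (y : Fin k → ℝ) : 0 ≤ maxCost k p y :=
  Real.iSup_nonneg fun _ => abs_nonneg _

theorem abs_sub_le_maxCost (p : ℝ) (y : Fin k → ℝ) (l : Fin k) : |p - y l| ≤ maxCost k p y :=
  le_ciSup (f := fun l => |p - y l|) (Set.finite_range _).bddAbove l

theorem maxCost_const [NeZero k] (p a : ℝ) : maxCost k p (fun _ => a) = |p - a| :=
  ciSup_const

end MaxCost

section Mechanism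

variable {k : ℕ} {M : TwoPhase k}

theorem TwoPhase.Valid.coe_ofFn_outcome (hM : M.Valid) (S : FLSetting k k) (x : Fin S.n → ℝ) :
    (↑(List.ofFn (outcome M S x)) : Multiset ℝ) = repsMS M S x := by
  have hcard : Multiset.card (repsMS M S x) = k := by simp [repsMS]
  exact Multiset.eq_of_le_of_card_le (hM.2 k _ hcard le_rfl) (by simp [hcard])

theorem TwoPhase.Valid.exists_outcome_eq_rep (hM : M.Valid) (S : FLSetting k k)
    (x : Fin S.n → ℝ) (j : Fin k) : ∃ l, outcome M S x l = M.rep k (groupMS S x j) := by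
  have hmem : M.rep k (groupMS S x j) ∈ repsMS M S x :=
    Multiset.mem_map_of_mem _ (mem_univ j)
  rwa [← hM.coe_ofFn_outcome, Multiset.mem_coe, List.mem_ofFn] at hmem

theorem TwoPhase.Valid.rep_replicate (hM : M.Valid) (m : ℕ) {s : ℕ} (hs : s ≠ 0) (a : ℝ) :
    M.rep m (Multiset.replicate s a) = a :=
  Multiset.eq_of_mem_replicate <| hM.1 m _ <| by
    rwa [Ne, ← Multiset.card_eq_zero, Multiset.card_replicate]

theorem TwoPhase.Valid.exists_rep_pair_eq (hM : M.Valid) (m : ℕ) :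
    ∃ a b : ℝ, a ≠ b ∧ M.rep m {b, a} = b := by
  have h : M.rep m {0, 1} = 0 ∨ M.rep m {0, 1} = 1 := by
    simpa using hM.1 m {0, 1} (by simp)
  rcases h with h | h
  · exact ⟨1, 0, one_ne_zero, h⟩
  · exact ⟨0, 1, zero_ne_one, by rwa [Multiset.pair_comm]⟩

end Mechanism

/-- The position profile with agent `i₀` at `b` and every other agent at `a`: the instance on which
the mechanism performs badly. -/
def outlierProfile {n : ℕ} (i₀ : Fin n) (a b : ℝ) : Fin n → ℝ :=
  Function.update (fun _ => a) i₀ b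

section OutlierProfile

variable {k n : ℕ} {i₀ i : Fin n} {a b : ℝ}

@[simp]
theorem outlierProfile_self : outlierProfile i₀ a b i₀ = b :=
  Function.update_self ..

theorem outlierProfile_of_ne (h : i ≠ i₀) : outlierProfile i₀ a b i = a :=
  Function.update_of_ne h ..

theorem map_outlierProfile_of_notMem {t : Finset (Fin n)} (h : i₀ ∉ t) :
    t.val.map (outlierProfile i₀ a b) = Multiset.replicate #t a := by
  refine Multiset.eq_replicate.2 ⟨Multiset.card_map .., fun p hp => ?_⟩
  obtain ⟨i, hi, rfl⟩ := Multiset.mem_map.1 hp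
  exact outlierProfile_of_ne (ne_of_mem_of_not_mem (mem_def.2 hi) h)

theorem sum_maxCost_outlierProfile_const [NeZero k] :
    ∑ i, maxCost k (outlierProfile i₀ a b i) (fun _ => a) = |b - a| := by
  rw [Fintype.sum_eq_single i₀ fun i hi => by simp [maxCost_const, outlierProfile_of_ne hi],
    maxCost_const, outlierProfile_self]

theorem abs_sub_le_maxCost_outlierProfile {y : Fin k → ℝ} {l₀ l₁ : Fin k} (h₀ : y l₀ = b)
    (h₁ : y l₁ = a) (i : Fin n) : |b - a| ≤ maxCost k (outlierProfile i₀ a b i) y := by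
  by_cases hi : i = i₀
  · simpa [hi, h₁] using abs_sub_le_maxCost b y l₁
  · simpa [outlierProfile_of_ne hi, h₀, abs_sub_comm] using abs_sub_le_maxCost a y l₀

end OutlierProfile

section OutlierInstance

variable {k m : ℕ} {S : FLSetting k m} {i₀ : Fin S.n} {a b : ℝ}

theorem feasible_outlierProfile_const (h : k < S.n) :
    Feasible S (outlierProfile i₀ a b) (fun _ => a) := by
  have hcard : Fintype.card (Fin k) ≤ Fintype.card {i // i ≠ i₀} := by
    rw [Fintype.card_fin, Fintype.card_subtype_compl, Fintype.card_fin, Fintype.card_unique]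
    exact Nat.le_sub_one_of_lt h
  obtain ⟨f⟩ := Function.Embedding.nonempty_of_card_le hcard
  exact ⟨fun l => f l, Subtype.val_injective.comp f.injective,
    fun l => (outlierProfile_of_ne (f l).2).symm⟩

theorem Feasible.abs_sub_le_sum_maxCost {y : Fin k → ℝ} (hk : 2 ≤ k)
    (hy : Feasible S (outlierProfile i₀ a b) y) :
    |b - a| ≤ ∑ i, maxCost k (outlierProfile i₀ a b i) y := by
  obtain ⟨f, hf, hyf⟩ := hy
  have : Nontrivial (Fin k) := Fin.nontrivial_iff_two_le.2 hk
  obtain ⟨l, hl⟩ : ∃ l, f l ≠ i₀ := hf.exists_ne i₀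
  calc |b - a| = |outlierProfile i₀ a b i₀ - y l| := by
        rw [hyf, outlierProfile_self, outlierProfile_of_ne hl]
    _ ≤ maxCost k (outlierProfile i₀ a b i₀) y := abs_sub_le_maxCost _ y l
    _ ≤ ∑ i, maxCost k (outlierProfile i₀ a b i) y :=
        single_le_sum (f := fun i => maxCost k (outlierProfile i₀ a b i) y)
          (fun i _ => maxCost_nonneg _ y) (mem_univ i₀)

theorem groupMS_outlierProfile_of_ne {j : Fin m} (hj : S.grp i₀ ≠ j) :
    groupMS S (outlierProfile i₀ a b) j = Multiset.replicate (groupSize S j) a :=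
  map_outlierProfile_of_notMem (by simpa using hj)

theorem groupMS_outlierProfile_self :
    groupMS S (outlierProfile i₀ a b) (S.grp i₀) =
      b ::ₘ Multiset.replicate (groupSize S (S.grp i₀) - 1) a := by
  have hi₀ : i₀ ∈ univ.filter fun i => S.grp i = S.grp i₀ := by simp
  rw [groupMS, ← insert_erase hi₀, insert_val_of_notMem (notMem_erase _ _), Multiset.map_cons,
    outlierProfile_self, map_outlierProfile_of_notMem (notMem_erase _ _), card_erase_of_mem hi₀,
    groupSize]

end OutlierInstance

theorem TwoPhase.Valid.abs_sub_le_maxCost_outcome {k : ℕ} {M : TwoPhase k} (hM : M.Valid)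
    (hk : 2 ≤ k) {S : FLSetting k k} {i₀ : Fin S.n} {a b : ℝ}
    (hrep : M.rep k (b ::ₘ Multiset.replicate (groupSize S (S.grp i₀) - 1) a) = b) (i : Fin S.n) :
    |b - a| ≤ maxCost k (outlierProfile i₀ a b i) (outcome M S (outlierProfile i₀ a b)) := by
  have : Nontrivial (Fin k) := Fin.nontrivial_iff_two_le.2 hk
  obtain ⟨j, hj⟩ := exists_ne (S.grp i₀)
  obtain ⟨l₀, hl₀⟩ := hM.exists_outcome_eq_rep S (outlierProfile i₀ a b) (S.grp i₀)
  obtain ⟨l₁, hl₁⟩ := hM.exists_outcome_eq_rep S (outlierProfile i₀ a b) j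
  rw [groupMS_outlierProfile_self, hrep] at hl₀
  rw [groupMS_outlierProfile_of_ne hj.symm, hM.rep_replicate k (groupSize_pos S j).ne'] at hl₁
  exact abs_sub_le_maxCost_outlierProfile hl₀ hl₁ i

-- Positivity of the optimal cost is what makes this a bound on a ratio: when all agents share one
-- position, the last inequality reads `0 ≤ 0`.
theorem stmt18_general {k : ℕ} (hk : 2 ≤ k) (M : TwoPhase k) (hM : M.Valid)
    (S : FLSetting k k) (hS : ∀ j, groupSize S j = 2) :
    ∃ (x : Fin S.n → ℝ) (yopt : Fin k → ℝ), Feasible S x yopt ∧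
      (∀ y : Fin k → ℝ, Feasible S x y → SC (maxCost k) S x yopt ≤ SC (maxCost k) S x y) ∧
      0 < SC (maxCost k) S x yopt ∧
      (2 * (k : ℝ)) * SC (maxCost k) S x yopt ≤ SC (maxCost k) S x (outcome M S x) := by
  have : NeZero k := ⟨by lia⟩
  have hn : S.n = k * 2 := FLSetting.n_eq_mul hS
  have hn_pos : (0 : ℝ) < S.n := by exact_mod_cast Nat.zero_lt_of_lt S.hn
  obtain ⟨a, b, hab, hrep⟩ := hM.exists_rep_pair_eq k
  obtain ⟨i₀, -⟩ := S.surj 0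
  have hopt : SC (maxCost k) S (outlierProfile i₀ a b) (fun _ => a) = |b - a| / S.n := by
    rw [SC_eq_sum_div hS, sum_maxCost_outlierProfile_const]
  refine ⟨outlierProfile i₀ a b, fun _ => a, feasible_outlierProfile_const (by lia), ?_, ?_, ?_⟩
  · intro y hy
    rw [hopt, SC_eq_sum_div hS]
    gcongr
    exact hy.abs_sub_le_sum_maxCost hk
  · rw [hopt]
    exact div_pos (abs_sub_pos.2 hab.symm) hn_pos
  · have hcost := hM.abs_sub_le_maxCost_outcome hk (i₀ := i₀) (a := a) (b := b) <| by
      simpa [hS] using hrep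
    have hsum := card_nsmul_le_sum univ _ _ fun i _ => hcost i
    rw [card_fin, nsmul_eq_mul] at hsum
    calc 2 * (k : ℝ) * SC (maxCost k) S (outlierProfile i₀ a b) (fun _ => a)
        = S.n * |b - a| / S.n := by rw [hopt, hn]; push_cast; ring
      _ ≤ SC (maxCost k) S (outlierProfile i₀ a b) (outcome M S (outlierProfile i₀ a b)) := by
        rw [SC_eq_sum_div hS]
        gcongr

/-- In the max-variant, for every `k ≥ 2`, every (valid) two-phase mechanism has
approximation ratio at least `2k`: there is an instance with `m = k` groups of two agents
each on which the output's social cost is at least `2k` times the minimum social cost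
over all feasible solutions. -/
theorem stmt18 (k : ℕ) (hk : 2 ≤ k) (M : TwoPhase k) (hM : M.Valid) :
    ∃ (S : FLSetting k k) (x : Fin S.n → ℝ),
      (∀ j : Fin k, groupSize S j = 2) ∧
      ∃ yopt : Fin k → ℝ, Feasible S x yopt ∧
        (∀ y : Fin k → ℝ, Feasible S x y → SC (maxCost k) S x yopt ≤ SC (maxCost k) S x y) ∧
        (2 * (k : ℝ)) * SC (maxCost k) S x yopt ≤ SC (maxCost k) S x (outcome M S x) := by
  obtain ⟨S, hS⟩ := FLSetting.exists_forall_groupSize_eq (k := k) (m := k) (s := 2) le_rfl (by lia)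
  obtain ⟨x, yopt, hfeas, hmin, -, hratio⟩ := stmt18_general hk M hM S hS
  exact ⟨S, x, hS, yopt, hfeas, hmin, hratio⟩

end
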